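/- arXiv:1905.13207 — 2 statements merged into one kernel-verified Lean document; each statement's English description precedes it below -/
import Mathlib

section
/- Let d ∈ (0, 2) and let A ⊂ ℂ be a compact set whose d-occupation measure m_A exists. Let U ⊆ ℂ be an open set containing A and let φ : U → ℂ be a conformal map, i.e. injective and holomorphic on U. Then the d-occupation measure m_{φ(A)} of the compact set φ(A) exists, and m_{φ(A)} equals the measure that is absolutely continuous with respect to the pushforward measure φ_* m_A with density w ↦ |φ'(φ^{−1}(w))|^d; in the paper's notation, m_{φ(A)} = |(φ^{−1})'|^{−d} · (φ_* m_A). -/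
open MeasureTheory

/-- `r^(d-2)` times Lebesgue measure on `ℂ ≅ ℝ²` restricted to the closed `r`-neighborhood
`A_r = {z : |z - x| ≤ r for some x ∈ A}` of `A`. -/
noncomputable def occApprox (A : Set ℂ) (d r : ℝ) : Measure ℂ :=
  ENNReal.ofReal (r ^ (d - 2)) • (volume.restrict (Metric.cthickening r A))

/-- `m` is the `d`-occupation measure of `A ⊆ ℂ`: `m` has finite and strictly positive total
mass, and the measures `r^(d-2) · Leb|_{A_r}` converge weakly to `m` as `r → 0⁺`, i.e. the
integrals of every bounded continuous function converge. -/
def IsOccupationMeasure (A : Set ℂ) (d : ℝ) (m : Measure ℂ) : Prop :=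
  m Set.univ ≠ 0 ∧ m Set.univ ≠ ⊤ ∧
  ∀ f : BoundedContinuousFunction ℂ ℝ,
    Filter.Tendsto (fun r : ℝ => ∫ z, f z ∂(occApprox A d r))
      (nhdsWithin 0 (Set.Ioi 0)) (nhds (∫ z, f z ∂m))

section ConformalMaps

open Filter Topology Set

/-- A holomorphic function which is injective near a point has nonvanishing derivative there. -/
theorem deriv_ne_zero_of_injOn_nhds {f : ℂ → ℂ} {a : ℂ} {s : Set ℂ} (hf : AnalyticAt ℂ f a)
    (hs : s ∈ 𝓝 a) (hinj : InjOn f s) : deriv f a ≠ 0 := by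
  intro hd
  have hfa : AnalyticAt ℂ (fun z => f z - f a) a := hf.sub analyticAt_const
  have hne : ¬ ∀ᶠ z in 𝓝 a, f z - f a = 0 := by
    intro h
    have h1 : ∀ᶠ z in 𝓝[≠] a, f z - f a = 0 ∧ z ∈ s ∧ z ≠ a :=
      (h.filter_mono nhdsWithin_le_nhds).and
        (Eventually.and (nhdsWithin_le_nhds hs) self_mem_nhdsWithin)
    obtain ⟨z, hz, hzs, hza⟩ := h1.exists
    exact hza (hinj hzs (mem_of_mem_nhds hs) (sub_eq_zero.mp hz))
  obtain ⟨n, g, hg, hga, hfg⟩ := hfa.exists_eventuallyEq_pow_smul_nonzero_iff.mpr hne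
  have hn0 : n ≠ 0 := by
    rintro rfl
    have := hfg.self_of_nhds
    simp at this
    exact hga this.symm
  have hn1 : n ≠ 1 := by
    rintro rfl
    have h1 : HasDerivAt (fun z => (z - a) ^ 1 • g z) (g a) a := by
      have := (((hasDerivAt_id a).sub_const a)).mul hg.differentiableAt.hasDerivAt
      simpa using! this
    have h2 : HasDerivAt (fun z => f z - f a) (g a) a := h1.congr_of_eventuallyEq hfg
    have h3 : HasDerivAt (fun z => f z - f a) (deriv f a) a :=
      hf.differentiableAt.hasDerivAt.sub_const _
    exact hga ((h2.unique h3).trans hd)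
  obtain ⟨c, hc⟩ := IsAlgClosed.exists_pow_nat_eq (g a) (Nat.pos_of_ne_zero hn0)
  have hc0 : c ≠ 0 := by
    rintro rfl
    rw [zero_pow hn0] at hc
    exact hga hc.symm
  set k : ℂ → ℂ := fun z => c * (g z / g a) ^ ((n : ℂ)⁻¹) with hk
  have hkan : AnalyticAt ℂ k a := by
    refine analyticAt_const.mul ((hg.div analyticAt_const hga).cpow analyticAt_const ?_)
    simp [hga]
  have hka : k a = c := by simp [hk, hga]
  have hkn : ∀ z, k z ^ n = g z := by
    intro z
    simp only [hk, mul_pow, hc]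
    rw [← Complex.cpow_nat_mul]
    have : (n : ℂ) ≠ 0 := by exact_mod_cast hn0
    rw [mul_inv_cancel₀ this, Complex.cpow_one]
    field_simp
  set h : ℂ → ℂ := fun z => (z - a) * k z with hh
  have hhan : AnalyticAt ℂ h a := (analyticAt_id.sub analyticAt_const).mul hkan
  have hhd : HasStrictDerivAt h c a := by
    have h1 := hhan.hasStrictDerivAt
    have h2 : HasDerivAt h c a := by
      have := (((hasDerivAt_id a).sub_const a)).mul hkan.differentiableAt.hasDerivAt
      simpa [hka] using! this
    rwa [h2.deriv] at h1
  have hmap := hhd.map_nhds_eq hc0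
  have hha : h a = 0 := by simp [hh]
  rw [hha] at hmap
  have hV : {z | z ∈ s ∧ f z - f a = (z - a) ^ n • g z} ∈ 𝓝 a := inter_mem hs hfg
  have hW := hmap ▸ image_mem_map (m := h) hV
  set ω : ℂ := Complex.exp (2 * Real.pi * Complex.I / n) with hω
  have hprim : IsPrimitiveRoot ω n := Complex.isPrimitiveRoot_exp n hn0
  have hω1 : ω ≠ 1 := by
    intro h1
    rw [h1] at hprim
    exact hn1 (IsPrimitiveRoot.one.unique hprim).symm
  have hmul : Tendsto (fun w : ℂ => ω * w) (𝓝 0) (𝓝 0) := by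
    have : Continuous (fun w : ℂ => ω * w) := by fun_prop
    simpa using this.tendsto 0
  have hev : ∀ᶠ w in 𝓝[≠] (0 : ℂ), (w ∈ h '' {z | z ∈ s ∧ f z - f a = (z - a) ^ n • g z} ∧
      ω * w ∈ h '' {z | z ∈ s ∧ f z - f a = (z - a) ^ n • g z}) ∧ w ≠ 0 := by
    refine Eventually.and (Eventually.filter_mono nhdsWithin_le_nhds ?_) self_mem_nhdsWithin
    exact Filter.Eventually.and hW (hmul hW)
  obtain ⟨w, ⟨⟨z₁, ⟨hz₁, hf₁⟩, h₁⟩, ⟨z₂, ⟨hz₂, hf₂⟩, h₂⟩⟩, hw⟩ := hev.exists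
  have key : ∀ z, (z - a) ^ n • g z = h z ^ n := by
    intro z
    simp only [hh, mul_pow, hkn, smul_eq_mul]
  have heq : f z₁ = f z₂ := by
    have : f z₁ - f a = f z₂ - f a := by
      rw [hf₁, hf₂, key, key, h₁, h₂, mul_pow, hprim.pow_eq_one, one_mul]
    linear_combination this
  have hzz := hinj hz₁ hz₂ heq
  rw [hzz, h₂] at h₁
  exact hω1 (mul_right_cancel₀ hw (by rw [h₁, one_mul]))

/-- Near `a ∈ A`, an injective holomorphic map distorts the distance to `A` by a factor close
to the modulus of its derivative at `a`. -/
theorem eventually_infDist_image_bounds {A U : Set ℂ} {φ : ℂ → ℂ} (hA : IsCompact A)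
    (hU : IsOpen U) (hAU : A ⊆ U) (hinj : InjOn φ U) (hhol : DifferentiableOn ℂ φ U)
    {a : ℂ} (ha : a ∈ A) {ε : ℝ} (hε : 0 < ε) :
    ∀ᶠ z in 𝓝 a,
      Metric.infDist (φ z) (φ '' A) ≤ (‖deriv φ a‖ + ε) * Metric.infDist z A ∧
      (‖deriv φ a‖ - ε) * Metric.infDist z A ≤ Metric.infDist (φ z) (φ '' A) := by
  have haU := hU.mem_nhds (hAU ha)
  have han : AnalyticAt ℂ φ a := hhol.analyticAt haU
  have hd := han.hasStrictDerivAt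
  have hne := deriv_ne_zero_of_injOn_nhds han haU hinj
  have hAne : A.Nonempty := ⟨a, ha⟩
  have hφA : IsCompact (φ '' A) := hA.image_of_continuousOn (hhol.continuousOn.mono hAU)
  have h1 : ∀ᶠ p : ℂ × ℂ in 𝓝 (a, a),
      ‖φ p.1 - φ p.2 - (p.1 - p.2) * deriv φ a‖ ≤ ε * ‖p.1 - p.2‖ := by
    have := hd.isLittleO.def hε
    simpa [smul_eq_mul] using this
  rw [nhds_prod_eq] at h1
  obtain ⟨t, ht, hbd⟩ := (eventually_prod_self_iff (r := fun x y : ℂ =>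
    ‖φ x - φ y - (x - y) * deriv φ a‖ ≤ ε * ‖x - y‖)).mp h1
  obtain ⟨δ, hδ, hball⟩ := Metric.mem_nhds_iff.mp (inter_mem ht haU)
  have hup : ∀ x ∈ Metric.ball a δ, ∀ y ∈ Metric.ball a δ,
      dist (φ x) (φ y) ≤ (‖deriv φ a‖ + ε) * dist x y ∧
      (‖deriv φ a‖ - ε) * dist x y ≤ dist (φ x) (φ y) := by
    intro x hx y hy
    have h := hbd x (hball hx).1 y (hball hy).1
    have h2 : ‖(x - y) * deriv φ a‖ = ‖deriv φ a‖ * ‖x - y‖ := by rw [norm_mul, mul_comm]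
    have h3 := norm_sub_norm_le (φ x - φ y) ((x - y) * deriv φ a)
    have h4 := norm_sub_norm_le ((x - y) * deriv φ a) (φ x - φ y)
    rw [norm_sub_rev ((x - y) * deriv φ a) (φ x - φ y)] at h4
    simp only [dist_eq_norm] at *
    constructor <;> linarith
  have himg : φ '' Metric.ball a δ ∈ 𝓝 (φ a) := by
    rw [← hd.map_nhds_eq hne]
    exact image_mem_map (Metric.ball_mem_nhds a hδ)
  obtain ⟨δ', hδ', hball'⟩ := Metric.mem_nhds_iff.mp himg
  have hcont : ∀ᶠ z in 𝓝 a, dist (φ z) (φ a) < δ' / 2 :=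
    han.continuousAt (Metric.ball_mem_nhds _ (half_pos hδ'))
  filter_upwards [Metric.ball_mem_nhds a (half_pos hδ), hcont] with z hz hzφ
  rw [Metric.mem_ball] at hz
  have hzb : z ∈ Metric.ball a δ := by rw [Metric.mem_ball]; linarith
  constructor
  · obtain ⟨x, hx, hxz⟩ := hA.exists_infDist_eq_dist hAne z
    have hxa : x ∈ Metric.ball a δ := by
      have h5 := Metric.infDist_le_dist_of_mem (x := z) ha
      have h6 := dist_triangle_left x a z
      rw [Metric.mem_ball]
      linarith
    rw [hxz]
    exact (Metric.infDist_le_dist_of_mem (mem_image_of_mem φ hx)).trans (hup z hzb x hxa).1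
  · obtain ⟨_, ⟨x, hx, rfl⟩, hxz⟩ := hφA.exists_infDist_eq_dist (hAne.image φ) (φ z)
    have hxa : x ∈ Metric.ball a δ := by
      have h5 := Metric.infDist_le_dist_of_mem (x := φ z) (mem_image_of_mem φ ha)
      have h6 := dist_triangle_left (φ x) (φ a) (φ z)
      have h7 : φ x ∈ Metric.ball (φ a) δ' := by rw [Metric.mem_ball]; linarith
      obtain ⟨y, hy, hyx⟩ := hball' h7
      rwa [← hinj (hball hy).2 (hAU hx) hyx]
    have h8 := Metric.infDist_le_dist_of_mem (x := z) hx
    rw [hxz]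
    rcases le_total 0 (‖deriv φ a‖ - ε) with h9 | h9
    · exact (mul_le_mul_of_nonneg_left h8 h9).trans (hup z hzb x hxa).2
    · exact (mul_nonpos_of_nonpos_of_nonneg h9 Metric.infDist_nonneg).trans dist_nonneg

/-- The ratio between the distance from `φ z` to `φ(A)` and the distance from `z` to `A` extends
to a positive continuous function, equal to `|φ'|` on `A`. -/
theorem exists_continuousOn_infDist_image_eq {A U : Set ℂ} {φ : ℂ → ℂ} (hA : IsCompact A)
    (hAne : A.Nonempty)
    (hU : IsOpen U) (hAU : A ⊆ U) (hinj : InjOn φ U) (hhol : DifferentiableOn ℂ φ U) :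
    ∃ q : ℂ → ℝ, ContinuousOn q U ∧ (∀ z ∈ U, 0 < q z) ∧ (∀ z ∈ A, q z = ‖deriv φ z‖) ∧
      ∀ z ∈ U, Metric.infDist (φ z) (φ '' A) = q z * Metric.infDist z A := by
  classical
  have hφA : IsCompact (φ '' A) := hA.image_of_continuousOn (hhol.continuousOn.mono hAU)
  have hpos : ∀ z, z ∉ A → 0 < Metric.infDist z A := fun z hz =>
    (hA.isClosed.notMem_iff_infDist_pos hAne).mp hz
  have hposφ : ∀ z ∈ U, z ∉ A → 0 < Metric.infDist (φ z) (φ '' A) := by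
    intro z hzU hz
    refine (hφA.isClosed.notMem_iff_infDist_pos (hAne.image φ)).mp ?_
    rintro ⟨x, hx, hxz⟩
    exact hz (hinj (hAU hx) hzU hxz ▸ hx)
  set q : ℂ → ℝ := fun z => if z ∈ A then ‖deriv φ z‖
    else Metric.infDist (φ z) (φ '' A) / Metric.infDist z A with hq
  have hqA : ∀ z ∈ A, q z = ‖deriv φ z‖ := fun z hz => if_pos hz
  have hqA' : ∀ z, z ∉ A → q z = Metric.infDist (φ z) (φ '' A) / Metric.infDist z A :=
    fun z hz => if_neg hz
  refine ⟨q, ?_, ?_, hqA, ?_⟩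
  · intro a haU
    apply ContinuousAt.continuousWithinAt
    by_cases ha : a ∈ A
    · rw [Metric.continuousAt_iff']
      intro ε hε
      have hderiv : ContinuousAt (deriv φ) a :=
        (hhol.analyticAt (hU.mem_nhds haU)).deriv.continuousAt
      filter_upwards [eventually_infDist_image_bounds hA hU hAU hinj hhol ha (half_pos hε),
        hderiv.norm.eventually (Metric.ball_mem_nhds _ hε)] with z hz hz'
      rw [hqA a ha]
      by_cases hzA : z ∈ A
      · rwa [hqA z hzA]
      · have hp := hpos z hzA
        rw [hqA' z hzA, Real.dist_eq, abs_lt]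
        have h1 := (div_le_iff₀ hp).mpr hz.1
        have h2 := (le_div_iff₀ hp).mpr hz.2
        constructor <;> linarith
    · have hφc : ContinuousAt φ a := hhol.continuousOn.continuousAt (hU.mem_nhds haU)
      have h1 : ContinuousAt (fun z => Metric.infDist (φ z) (φ '' A) / Metric.infDist z A) a :=
        ((Metric.continuous_infDist_pt _).continuousAt.comp hφc).div
          (Metric.continuous_infDist_pt _).continuousAt (hpos a ha).ne'
      refine h1.congr ?_
      filter_upwards [hA.isClosed.isOpen_compl.mem_nhds ha] with z hz
      exact (hqA' z hz).symm
  · intro z hz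
    by_cases hzA : z ∈ A
    · rw [hqA z hzA, norm_pos_iff]
      exact deriv_ne_zero_of_injOn_nhds (hhol.analyticAt (hU.mem_nhds hz)) (hU.mem_nhds hz) hinj
    · rw [hqA' z hzA]
      exact div_pos (hposφ z hz hzA) (hpos z hzA)
  · intro z hz
    by_cases hzA : z ∈ A
    · rw [Metric.infDist_zero_of_mem hzA, Metric.infDist_zero_of_mem (mem_image_of_mem φ hzA),
        mul_zero]
    · rw [hqA' z hzA, div_mul_cancel₀ _ (hpos z hzA).ne']

/-- Change of variables for the image under an injective holomorphic map. -/
theorem integral_image_eq_integral_norm_deriv_sq {U s : Set ℂ} {φ : ℂ → ℂ} (hU : IsOpen U)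
    (hinj : InjOn φ U) (hhol : DifferentiableOn ℂ φ U) (hsU : s ⊆ U) (hs : MeasurableSet s)
    (g : ℂ → ℝ) :
    ∫ w in φ '' s, g w = ∫ z in s, ‖deriv φ z‖ ^ 2 * g (φ z) := by
  have h := integral_image_eq_integral_abs_det_fderiv_smul (volume : Measure ℂ) (f := φ)
    (f' := fun z => (ContinuousLinearMap.toSpanSingleton ℂ (deriv φ z)).restrictScalars ℝ) hs
    (fun x hx => by
      have := (hhol.differentiableAt (hU.mem_nhds (hsU hx))).hasDerivAt
      exact (this.hasFDerivAt.restrictScalars ℝ).hasFDerivWithinAt) (hinj.mono hsU) g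
  rw [h]
  congr 1
  ext z
  have hdet : ((ContinuousLinearMap.toSpanSingleton ℂ (deriv φ z)).restrictScalars ℝ).det
      = ‖deriv φ z‖ ^ 2 := by
    simp [ContinuousLinearMap.det, LinearMap.det_restrictScalars, Algebra.norm_complex_apply,
      Complex.normSq_eq_norm_sq]
  rw [hdet, abs_of_nonneg (sq_nonneg _), smul_eq_mul]

end ConformalMaps

section VariableRadius

open Filter Topology Set
open scoped BoundedContinuousFunction

/-- A partition of unity such that `u` oscillates by at most `2 * η` on the support of each of its
members. -/
theorem exists_partition_of_unity_small_oscillation {X : Type*} [TopologicalSpace X]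
    (u : X →ᵇ ℝ) {η : ℝ} (hη : 0 < η) :
    ∃ (n : ℕ) (t : ℕ → ℝ) (h : ℕ → X →ᵇ ℝ), (∀ i z, 0 ≤ h i z) ∧
      (∀ z, ∑ i ∈ Finset.range n, h i z = 1) ∧
      ∀ i z, h i z ≠ 0 → t i ≤ u z ∧ u z ≤ t i + 2 * η := by
  set M := ‖u‖ with hM
  have hu : ∀ z, -M ≤ u z ∧ u z ≤ M := fun z => abs_le.mp (u.norm_coe_le_norm z)
  set t : ℕ → ℝ := fun i => -M - η + i * η with ht
  have hts : ∀ i, t (i + 1) = t i + η := fun i => by simp only [ht]; push_cast; ring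
  set c : ℕ → X → ℝ := fun i z => max 0 (min 1 ((u z - t i) / η)) with hc
  have hc0 : ∀ i z, 0 ≤ c i z := fun i z => le_max_left _ _
  have hc1 : ∀ i z, c i z ≤ 1 := fun i z => max_le zero_le_one (min_le_left _ _)
  have hcc : ∀ i, Continuous (c i) := fun i => by
    have := u.continuous
    simp only [hc]
    fun_prop
  have hcm : ∀ i z, c (i + 1) z ≤ c i z := by
    intro i z
    refine max_le_max le_rfl (min_le_min le_rfl ?_)
    rw [hts]
    gcongr
    linarith
  obtain ⟨n, hn⟩ := exists_nat_ge ((2 * M + η) / η)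
  have hn' : 2 * M + η ≤ n * η := (div_le_iff₀ hη).mp hn
  refine ⟨n, t, fun i => BoundedContinuousFunction.ofNormedAddCommGroup
    (fun z => c i z - c (i + 1) z) ((hcc i).sub (hcc (i + 1))) 1 ?_, ?_, ?_, ?_⟩
  · intro z
    rw [Real.norm_eq_abs, abs_le]
    constructor <;> linarith [hc0 i z, hc1 i z, hc0 (i + 1) z, hc1 (i + 1) z]
  · intro i z
    exact sub_nonneg.mpr (hcm i z)
  · intro z
    simp only [BoundedContinuousFunction.coe_ofNormedAddCommGroup]
    rw [Finset.sum_range_sub' (fun i => c i z)]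
    have h0 : c 0 z = 1 := by
      have : 1 ≤ (u z - t 0) / η := by
        rw [le_div_iff₀ hη]
        simp only [ht]
        push_cast
        linarith [(hu z).1]
      simp [hc, this]
    have h1 : c n z = 0 := by
      have : (u z - t n) / η ≤ 0 := by
        refine div_nonpos_of_nonpos_of_nonneg ?_ hη.le
        simp only [ht]
        linarith [(hu z).2]
      exact max_eq_left ((min_le_right _ _).trans this)
    rw [h0, h1, sub_zero]
  · intro i z hz
    simp only [BoundedContinuousFunction.coe_ofNormedAddCommGroup] at hz
    by_contra hcon
    refine hz ?_
    rcases not_and_or.mp hcon with h | h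
    · have e : ∀ j, t i ≤ t j → c j z = 0 := by
        intro j hj
        have : (u z - t j) / η ≤ 0 := by
          refine div_nonpos_of_nonpos_of_nonneg ?_ hη.le
          linarith
        exact max_eq_left ((min_le_right _ _).trans this)
      rw [e i le_rfl, e (i + 1) (by rw [hts]; linarith), sub_zero]
    · have e : ∀ j, t j ≤ t i + η → c j z = 1 := by
        intro j hj
        have : 1 ≤ (u z - t j) / η := by
          rw [le_div_iff₀ hη]
          linarith
        simp [hc, this]
      rw [e i (by linarith), e (i + 1) (hts i).le, sub_self]

variable {A : Set ℂ} {d : ℝ} {m : Measure ℂ}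

theorem mem_cthickening_iff_infDist_le (hAne : A.Nonempty) {r : ℝ} (hr : 0 ≤ r) {z : ℂ} :
    z ∈ Metric.cthickening r A ↔ Metric.infDist z A ≤ r := by
  rw [Metric.mem_cthickening_iff, Metric.infDist,
    ENNReal.le_ofReal_iff_toReal_le (Metric.infEDist_ne_top hAne) hr]

theorem integral_occApprox {r : ℝ} (hr : 0 ≤ r) (f : ℂ → ℝ) :
    ∫ z, f z ∂(occApprox A d r) = r ^ (d - 2) * ∫ z in Metric.cthickening r A, f z := by
  rw [occApprox, integral_smul_measure, ENNReal.toReal_ofReal (Real.rpow_nonneg hr _), smul_eq_mul]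

theorem BoundedContinuousFunction.integrableOn_of_isBounded (f : ℂ →ᵇ ℝ) {s : Set ℂ}
    (hs : Bornology.IsBounded s) : IntegrableOn f s := by
  obtain ⟨R, hR⟩ := hs.subset_closedBall 0
  exact (f.continuous.continuousOn.integrableOn_compact (isCompact_closedBall _ _)).mono_set hR

theorem IsOccupationMeasure.nonempty (hm : IsOccupationMeasure A d m) : A.Nonempty := by
  rw [nonempty_iff_ne_empty]
  rintro rfl
  have h := hm.2.2 (BoundedContinuousFunction.const ℂ 1)
  have h0 : ∀ r, ∫ z, BoundedContinuousFunction.const ℂ (1 : ℝ) z ∂(occApprox ∅ d r) = 0 := by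
    intro r
    simp [occApprox]
  simp only [h0] at h
  have h1 := tendsto_nhds_unique h tendsto_const_nhds
  simp [Measure.real, ENNReal.toReal_eq_zero_iff, hm.1, hm.2.1] at h1

/-- An occupation measure of a compact set is concentrated on that set. -/
theorem IsOccupationMeasure.measure_compl (hA : IsCompact A) (hm : IsOccupationMeasure A d m) :
    m Aᶜ = 0 := by
  have hAne := hm.nonempty
  have : IsFiniteMeasure m := ⟨hm.2.1.lt_top⟩
  have hfc : Continuous fun z : ℂ => min 1 (Metric.infDist z A) :=
    continuous_const.min (Metric.continuous_infDist_pt A)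
  have hf0 : ∀ z : ℂ, 0 ≤ min 1 (Metric.infDist z A) := fun z =>
    le_min zero_le_one Metric.infDist_nonneg
  set f : ℂ →ᵇ ℝ := BoundedContinuousFunction.ofNormedAddCommGroup
    (fun z : ℂ => min 1 (Metric.infDist z A)) hfc 1 (fun z => by
      rw [Real.norm_eq_abs, abs_of_nonneg (hf0 z)]; exact min_le_left _ _) with hf
  have h1 := hm.2.2 (BoundedContinuousFunction.const ℂ 1)
  have hlim : Tendsto (fun r : ℝ => r * ∫ z, BoundedContinuousFunction.const ℂ (1 : ℝ) z
      ∂(occApprox A d r)) (𝓝[>] 0) (𝓝 0) := by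
    have h2 : Tendsto (fun r : ℝ => r) (𝓝[>] 0) (𝓝 0) := nhdsWithin_le_nhds
    simpa using h2.mul h1
  have hzero : Tendsto (fun r : ℝ => ∫ z, f z ∂(occApprox A d r)) (𝓝[>] 0) (𝓝 0) := by
    refine squeeze_zero' ?_ ?_ hlim
    · exact Eventually.of_forall fun r => integral_nonneg hf0
    · filter_upwards [self_mem_nhdsWithin] with r hr
      rw [mem_Ioi] at hr
      rw [integral_occApprox hr.le, integral_occApprox hr.le, mul_left_comm]
      refine mul_le_mul_of_nonneg_left ?_ (Real.rpow_nonneg hr.le _)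
      rw [← integral_const_mul]
      refine setIntegral_mono_on (f.integrableOn_of_isBounded hA.isBounded.cthickening)
        (Integrable.const_mul ((BoundedContinuousFunction.const ℂ 1).integrableOn_of_isBounded
          hA.isBounded.cthickening) r) Metric.isClosed_cthickening.measurableSet ?_
      intro z hz
      have := (mem_cthickening_iff_infDist_le hAne hr.le).mp hz
      simpa [hf] using Or.inr this
  have hint : ∫ z, f z ∂m = 0 := tendsto_nhds_unique (hm.2.2 f) hzero
  have hae := (integral_eq_zero_iff_of_nonneg hf0 (f.integrable m)).mp hint
  rw [Filter.EventuallyEq, ae_iff] at hae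
  refine measure_mono_null ?_ hae
  intro z hz
  have hp := (hA.isClosed.notMem_iff_infDist_pos hAne).mp hz
  exact (lt_min zero_lt_one hp).ne'

theorem IsOccupationMeasure.tendsto_mul_radius (hm : IsOccupationMeasure A d m) {T : ℝ}
    (hT : 0 < T) (f : ℂ →ᵇ ℝ) :
    Tendsto (fun r : ℝ => r ^ (d - 2) * ∫ z in Metric.cthickening (r * T) A, f z) (𝓝[>] 0)
      (𝓝 (T ^ (2 - d) * ∫ z, f z ∂m)) := by
  have hs : Tendsto (fun r : ℝ => r * T) (𝓝[>] 0) (𝓝[>] 0) := by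
    refine tendsto_nhdsWithin_of_tendsto_nhds_of_eventually_within _ ?_ ?_
    · have : Continuous fun r : ℝ => r * T := by fun_prop
      exact (by simpa using this.tendsto 0 : Tendsto (fun r : ℝ => r * T) (𝓝 0) (𝓝 0)).mono_left
        nhdsWithin_le_nhds
    · filter_upwards [self_mem_nhdsWithin] with r hr
      exact mul_pos hr hT
  refine (((hm.2.2 f).comp hs).const_mul (T ^ (2 - d))).congr' ?_
  filter_upwards [self_mem_nhdsWithin] with r hr
  rw [mem_Ioi] at hr
  simp only [Function.comp_apply]
  rw [integral_occApprox (mul_pos hr hT).le, Real.mul_rpow hr.le hT.le, ← mul_assoc]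
  congr 1
  rw [mul_left_comm, ← Real.rpow_add hT]
  simp

/-- The set of points whose distance to `A` is at most `r * exp (u z)`. -/
def expThickening (A : Set ℂ) (u : ℂ → ℝ) (r : ℝ) : Set ℂ :=
  {z | Metric.infDist z A ≤ r * Real.exp (u z)}

theorem isClosed_expThickening {u : ℂ → ℝ} (hu : Continuous u) (r : ℝ) :
    IsClosed (expThickening A u r) :=
  isClosed_le (Metric.continuous_infDist_pt A) (by fun_prop)

theorem expThickening_subset_cthickening (hAne : A.Nonempty) (u : ℂ →ᵇ ℝ) {r : ℝ} (hr : 0 ≤ r) :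
    expThickening A u r ⊆ Metric.cthickening (r * Real.exp ‖u‖) A := by
  intro z hz
  rw [mem_cthickening_iff_infDist_le hAne (by positivity)]
  refine le_trans (show Metric.infDist z A ≤ r * Real.exp (u z) from hz) ?_
  gcongr
  exact (abs_le.mp (u.norm_coe_le_norm z)).2

theorem setIntegral_le_setIntegral_of_support {f : ℂ → ℝ} {s t : Set ℂ} (hf : ∀ z, 0 ≤ f z)
    (hs : MeasurableSet s) (ht : MeasurableSet t) (hft : IntegrableOn f t)
    (hfs : IntegrableOn f s) (hst : ∀ z ∈ s, f z ≠ 0 → z ∈ t) :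
    ∫ z in s, f z ≤ ∫ z in t, f z := by
  rw [← integral_indicator hs, ← integral_indicator ht]
  refine integral_mono ((integrable_indicator_iff hs).mpr hfs)
    ((integrable_indicator_iff ht).mpr hft) fun z => ?_
  by_cases hz : z ∈ s
  · by_cases h0 : f z = 0
    · simp [indicator, h0]
    · simp [hz, hst z hz h0]
  · simp [hz, indicator_nonneg (fun z _ => hf z)]

theorem IsOccupationMeasure.tendsto_expThickening_of_nonneg (hA : IsCompact A) (hd : d < 2)
    (hm : IsOccupationMeasure A d m) (u F : ℂ →ᵇ ℝ) (hF : ∀ z, 0 ≤ F z) :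
    Tendsto (fun r : ℝ => r ^ (d - 2) * ∫ z in expThickening A u r, F z) (𝓝[>] 0)
      (𝓝 (∫ z, F z * Real.exp ((2 - d) * u z) ∂m)) := by
  have hAne := hm.nonempty
  have : IsFiniteMeasure m := ⟨hm.2.1.lt_top⟩
  have hd' : 0 < 2 - d := by linarith
  set J := ∫ z, F z * Real.exp ((2 - d) * u z) ∂m with hJ
  set I : ℝ → ℝ := fun r => r ^ (d - 2) * ∫ z in expThickening A u r, F z with hI
  have hexp : Continuous fun z => Real.exp ((2 - d) * u z) := by
    have := u.continuous
    fun_prop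
  have hexpb : ∀ z, ‖Real.exp ((2 - d) * u z)‖ ≤ Real.exp ((2 - d) * ‖u‖) := by
    intro z
    rw [Real.norm_eq_abs, Real.abs_exp]
    gcongr
    exact (abs_le.mp (u.norm_coe_le_norm z)).2
  set E : ℂ →ᵇ ℝ := BoundedContinuousFunction.ofNormedAddCommGroup _ hexp _ hexpb with hE
  have main : ∀ η : ℝ, 0 < η → ∃ L : ℝ, L ≤ J ∧ J ≤ Real.exp ((2 - d) * (2 * η)) * L ∧
      ∃ lo up : ℝ → ℝ, Tendsto lo (𝓝[>] 0) (𝓝 L) ∧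
        Tendsto up (𝓝[>] 0) (𝓝 (Real.exp ((2 - d) * (2 * η)) * L)) ∧
        ∀ᶠ r in 𝓝[>] 0, lo r ≤ I r ∧ I r ≤ up r := by
    intro η hη
    obtain ⟨n, t, h, h0, h1, hsupp⟩ := exists_partition_of_unity_small_oscillation u hη
    have hnn : ∀ i z, 0 ≤ (F * h i) z := fun i z => mul_nonneg (hF z) (h0 i z)
    have hJsum : J = ∑ i ∈ Finset.range n, ∫ z, (F * h i * E) z ∂m := by
      rw [← integral_finsetSum _ fun i _ => (F * h i * E).integrable m]
      refine integral_congr_ae (Eventually.of_forall fun z => ?_)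
      have : ∑ i ∈ Finset.range n, (F * h i * E) z =
          F z * (∑ i ∈ Finset.range n, h i z) * E z := by
        rw [Finset.mul_sum, Finset.sum_mul]
        rfl
      simp only [this, h1, mul_one]
      rfl
    have hexpt : ∀ x : ℝ, Real.exp x ^ (2 - d) = Real.exp ((2 - d) * x) := fun x => by
      rw [← Real.exp_mul, mul_comm]
    refine ⟨∑ i ∈ Finset.range n, Real.exp (t i) ^ (2 - d) * ∫ z, (F * h i) z ∂m, ?_, ?_,
      fun r => ∑ i ∈ Finset.range n, r ^ (d - 2) *
        ∫ z in Metric.cthickening (r * Real.exp (t i)) A, (F * h i) z,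
      fun r => ∑ i ∈ Finset.range n, r ^ (d - 2) *
        ∫ z in Metric.cthickening (r * Real.exp (t i + 2 * η)) A, (F * h i) z, ?_, ?_, ?_⟩
    · rw [hJsum]
      refine Finset.sum_le_sum fun i _ => ?_
      rw [← integral_const_mul]
      refine integral_mono (((F * h i).integrable m).const_mul _) ((F * h i * E).integrable m)
        fun z => ?_
      change _ * (F * h i) z ≤ (F * h i) z * Real.exp ((2 - d) * u z)
      rw [mul_comm, hexpt]
      by_cases hz : h i z = 0
      · simp [hz]
      · have := (hsupp i z hz).1
        have := hnn i z
        gcongr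
    · rw [hJsum, Finset.mul_sum]
      refine Finset.sum_le_sum fun i _ => ?_
      rw [← mul_assoc, ← integral_const_mul]
      refine integral_mono ((F * h i * E).integrable m) (((F * h i).integrable m).const_mul _)
        fun z => ?_
      change (F * h i) z * Real.exp ((2 - d) * u z) ≤ _ * (F * h i) z
      rw [mul_comm _ ((F * h i) z), hexpt, ← Real.exp_add, ← mul_add]
      by_cases hz : h i z = 0
      · simp [hz]
      · have := (hsupp i z hz).2
        have := hnn i z
        gcongr
        linarith
    · exact tendsto_finsetSum _ fun i _ => hm.tendsto_mul_radius (Real.exp_pos _) _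
    · rw [Finset.mul_sum]
      refine tendsto_finsetSum _ fun i _ => ?_
      have he : Real.exp ((2 - d) * (2 * η)) * Real.exp (t i) ^ (2 - d) =
          Real.exp (t i + 2 * η) ^ (2 - d) := by
        rw [hexpt, hexpt, ← Real.exp_add]
        ring_nf
      rw [← mul_assoc, he]
      exact hm.tendsto_mul_radius (Real.exp_pos _) _
    · filter_upwards [self_mem_nhdsWithin] with r hr
      rw [mem_Ioi] at hr
      have hSb : Bornology.IsBounded (expThickening A u r) :=
        hA.isBounded.cthickening.subset (expThickening_subset_cthickening hAne u hr.le)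
      have hSm := (isClosed_expThickening (A := A) u.continuous r).measurableSet
      have hIsum : I r = ∑ i ∈ Finset.range n, r ^ (d - 2) *
          ∫ z in expThickening A u r, (F * h i) z := by
        rw [← Finset.mul_sum, ← integral_finsetSum _
          fun i _ => (F * h i).integrableOn_of_isBounded hSb]
        simp only [hI]
        congr 2
        ext z
        change F z = ∑ i ∈ Finset.range n, F z * h i z
        rw [← Finset.mul_sum, h1, mul_one]
      have hr' : 0 ≤ r ^ (d - 2) := Real.rpow_nonneg hr.le _
      rw [hIsum]
      constructor
      · refine Finset.sum_le_sum fun i _ => mul_le_mul_of_nonneg_left ?_ hr'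
        refine setIntegral_le_setIntegral_of_support (hnn i)
          Metric.isClosed_cthickening.measurableSet hSm
          ((F * h i).integrableOn_of_isBounded hSb)
          ((F * h i).integrableOn_of_isBounded hA.isBounded.cthickening) fun z hz hne => ?_
        rw [mem_cthickening_iff_infDist_le hAne (by positivity)] at hz
        have := (hsupp i z (right_ne_zero_of_mul hne)).1
        refine hz.trans ?_
        gcongr
      · refine Finset.sum_le_sum fun i _ => mul_le_mul_of_nonneg_left ?_ hr'
        refine setIntegral_le_setIntegral_of_support (hnn i) hSm
          Metric.isClosed_cthickening.measurableSet
          ((F * h i).integrableOn_of_isBounded hA.isBounded.cthickening)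
          ((F * h i).integrableOn_of_isBounded hSb) fun z hz hne => ?_
        rw [mem_cthickening_iff_infDist_le hAne (by positivity)]
        have := (hsupp i z (right_ne_zero_of_mul hne)).2
        refine le_trans (show Metric.infDist z A ≤ r * Real.exp (u z) from hz) ?_
        gcongr
  have hκ : Tendsto (fun η : ℝ => Real.exp ((2 - d) * (2 * η))) (𝓝[>] 0) (𝓝 1) := by
    have : Continuous fun η : ℝ => Real.exp ((2 - d) * (2 * η)) := by fun_prop
    exact (by simpa using this.tendsto 0 : Tendsto (fun η : ℝ => Real.exp ((2 - d) * (2 * η)))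
      (𝓝 0) (𝓝 1)).mono_left nhdsWithin_le_nhds
  refine tendsto_order.mpr ⟨fun a ha => ?_, fun b hb => ?_⟩
  · have h1 : Tendsto (fun η : ℝ => J / Real.exp ((2 - d) * (2 * η))) (𝓝[>] 0) (𝓝 J) := by
      simpa using! (tendsto_const_nhds (x := J)).div hκ one_ne_zero
    obtain ⟨η, hη1, hη⟩ := ((h1.eventually (lt_mem_nhds ha)).and self_mem_nhdsWithin).exists
    obtain ⟨L, -, hL, lo, up, hlo, -, hev⟩ := main η hη
    have haL : a < L := hη1.trans_le ((div_le_iff₀' (Real.exp_pos _)).mpr hL)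
    filter_upwards [hlo.eventually (lt_mem_nhds haL), hev] with r h2 h3
    exact h2.trans_le h3.1
  · have h1 : Tendsto (fun η : ℝ => Real.exp ((2 - d) * (2 * η)) * J) (𝓝[>] 0) (𝓝 J) := by
      simpa using hκ.mul_const J
    obtain ⟨η, hη1, hη⟩ := ((h1.eventually (gt_mem_nhds hb)).and self_mem_nhdsWithin).exists
    obtain ⟨L, hL, -, lo, up, -, hup, hev⟩ := main η hη
    have haL : Real.exp ((2 - d) * (2 * η)) * L < b :=
      (mul_le_mul_of_nonneg_left hL (Real.exp_pos _).le).trans_lt hη1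
    filter_upwards [hup.eventually (gt_mem_nhds haL), hev] with r h2 h3
    exact h3.2.trans_lt h2

/-- Thickening `A` with a variable radius multiplies the occupation measure by a density. -/
theorem IsOccupationMeasure.tendsto_expThickening (hA : IsCompact A) (hd : d < 2)
    (hm : IsOccupationMeasure A d m) (u F : ℂ →ᵇ ℝ) :
    Tendsto (fun r : ℝ => r ^ (d - 2) * ∫ z in expThickening A u r, F z) (𝓝[>] 0)
      (𝓝 (∫ z, F z * Real.exp ((2 - d) * u z) ∂m)) := by
  have hAne := hm.nonempty
  have : IsFiniteMeasure m := ⟨hm.2.1.lt_top⟩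
  set C : ℂ →ᵇ ℝ := BoundedContinuousFunction.const ℂ ‖F‖ with hC
  have h1 := hm.tendsto_expThickening_of_nonneg hA hd u (F + C) fun z => by
    have := (abs_le.mp (F.norm_coe_le_norm z)).1
    simp only [hC, BoundedContinuousFunction.add_apply, BoundedContinuousFunction.const_apply]
    linarith
  have h2 := hm.tendsto_expThickening_of_nonneg hA hd u C fun z => by simp [hC]
  have hint : ∀ G : ℂ →ᵇ ℝ, Integrable (fun z => G z * Real.exp ((2 - d) * u z)) m := by
    intro G
    have hu := u.continuous
    have hG := G.continuous
    refine Integrable.mono' (integrable_const (‖G‖ * Real.exp ((2 - d) * ‖u‖)))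
      (by fun_prop : Continuous _).aestronglyMeasurable (Eventually.of_forall fun z => ?_)
    rw [norm_mul, Real.norm_eq_abs (Real.exp _), Real.abs_exp]
    have h3 := G.norm_coe_le_norm z
    have h4 := (abs_le.mp (u.norm_coe_le_norm z)).2
    have : 0 ≤ 2 - d := by linarith
    gcongr
  have h3 := h1.sub h2
  rw [← integral_sub (hint _) (hint _)] at h3
  simp only [BoundedContinuousFunction.add_apply, add_mul, add_sub_cancel_right] at h3
  refine h3.congr' ?_
  filter_upwards [self_mem_nhdsWithin] with r hr
  rw [mem_Ioi] at hr
  have hSb : Bornology.IsBounded (expThickening A u r) :=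
    hA.isBounded.cthickening.subset (expThickening_subset_cthickening hAne u hr.le)
  rw [integral_add (F.integrableOn_of_isBounded hSb) (C.integrableOn_of_isBounded hSb)]
  ring

end VariableRadius

section Covariance

open Filter Topology Set
open scoped BoundedContinuousFunction

theorem IsCompact.exists_boundedContinuousFunction_eqOn {K : Set ℂ} (hK : IsCompact K)
    {f : ℂ → ℝ} (hf : ContinuousOn f K) : ∃ F : ℂ →ᵇ ℝ, EqOn F f K := by
  have : CompactSpace K := isCompact_iff_compactSpace.mp hK
  obtain ⟨F, -, hF⟩ := BoundedContinuousFunction.exists_norm_eq_domRestrict_eq_of_closed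
    (BoundedContinuousFunction.mkOfCompact ⟨fun z : K => f z, hf.domRestrict⟩) hK.isClosed
  exact ⟨F, fun z hz => DFunLike.congr_fun hF ⟨z, hz⟩⟩

variable {A U : Set ℂ} {φ : ℂ → ℂ} {d : ℝ} {m : Measure ℂ}

/-- The weak convergence of the measures approximating the occupation measure of `φ(A)`. -/
theorem IsOccupationMeasure.tendsto_integral_image (hA : IsCompact A) (hd : d < 2)
    (hm : IsOccupationMeasure A d m) (hU : IsOpen U) (hAU : A ⊆ U) (hinj : InjOn φ U)
    (hhol : DifferentiableOn ℂ φ U) (g : ℂ →ᵇ ℝ) :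
    Tendsto (fun r : ℝ => ∫ w, g w ∂(occApprox (φ '' A) d r)) (𝓝[>] 0)
      (𝓝 (∫ z, ‖deriv φ z‖ ^ d * g (φ z) ∂m)) := by
  have hAne := hm.nonempty
  have hφA : IsCompact (φ '' A) := hA.image_of_continuousOn (hhol.continuousOn.mono hAU)
  obtain ⟨q, hqc, hq0, hqA, hq⟩ := exists_continuousOn_infDist_image_eq hA hAne hU hAU hinj hhol
  obtain ⟨δ, hδ, hδU⟩ := hA.exists_cthickening_subset_open hU hAU
  set K := Metric.cthickening δ A with hK
  have hKc : IsCompact K := hA.cthickening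
  have hAK : A ⊆ K := Metric.self_subset_cthickening A
  have hne : ∀ z ∈ U, deriv φ z ≠ 0 := fun z hz =>
    deriv_ne_zero_of_injOn_nhds (hhol.analyticAt (hU.mem_nhds hz)) (hU.mem_nhds hz) hinj
  have hderiv : ContinuousOn (deriv φ) U := fun z hz =>
    (hhol.analyticAt (hU.mem_nhds hz)).deriv.continuousAt.continuousWithinAt
  obtain ⟨u, hu⟩ := hKc.exists_boundedContinuousFunction_eqOn (f := fun z => -Real.log (q z))
    ((hqc.mono hδU).log fun z hz => (hq0 z (hδU hz)).ne').neg
  obtain ⟨F, hF⟩ := hKc.exists_boundedContinuousFunction_eqOn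
    (f := fun z => ‖deriv φ z‖ ^ 2 * g (φ z))
    (((hderiv.mono hδU).norm.pow 2).mul
      (g.continuous.comp_continuousOn (hhol.continuousOn.mono hδU)))
  have hlim := hm.tendsto_expThickening hA hd u F
  have hlimit : ∫ z, F z * Real.exp ((2 - d) * u z) ∂m = ∫ z, ‖deriv φ z‖ ^ d * g (φ z) ∂m := by
    refine integral_congr_ae ?_
    have hae : ∀ᵐ z ∂m, z ∈ A := hm.measure_compl hA
    filter_upwards [hae] with z hz
    have hpos : 0 < ‖deriv φ z‖ := norm_pos_iff.mpr (hne z (hAU hz))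
    rw [hF (hAK hz), hu (hAK hz)]
    simp only [hqA z hz]
    have h1 : Real.exp ((2 - d) * -Real.log ‖deriv φ z‖) = ‖deriv φ z‖ ^ (d - 2) := by
      rw [Real.rpow_def_of_pos hpos]
      ring_nf
    rw [h1, mul_right_comm, ← Real.rpow_natCast, ← Real.rpow_add hpos]
    norm_num
  rw [hlimit] at hlim
  refine hlim.congr' ?_
  have hKnhds : φ '' K ∈ 𝓝ˢ (φ '' A) := by
    rw [mem_nhdsSet_iff_forall]
    rintro _ ⟨a, ha, rfl⟩
    have han := hhol.analyticAt (hU.mem_nhds (hAU ha))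
    rw [← han.hasStrictDerivAt.map_nhds_eq (hne a (hAU ha))]
    exact image_mem_map (mem_nhdsSet_iff_forall.mp (Metric.cthickening_mem_nhdsSet A hδ) a ha)
  obtain ⟨V, hV, hφV, hVK⟩ := mem_nhdsSet_iff_exists.mp hKnhds
  obtain ⟨δ', hδ', hδ'V⟩ := hφA.exists_cthickening_subset_open hV hφV
  have hsmall : ∀ᶠ r : ℝ in 𝓝[>] 0, r * Real.exp ‖u‖ ≤ δ := by
    have h1 : Continuous fun r : ℝ => r * Real.exp ‖u‖ := by fun_prop
    have h2 : Tendsto (fun r : ℝ => r * Real.exp ‖u‖) (𝓝 0) (𝓝 0) := by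
      simpa using h1.tendsto 0
    exact (h2.mono_left nhdsWithin_le_nhds).eventually (Iic_mem_nhds hδ)
  filter_upwards [self_mem_nhdsWithin, hsmall,
    nhdsWithin_le_nhds (Iic_mem_nhds hδ')] with r hr hr1 hr2
  rw [mem_Ioi] at hr
  rw [integral_occApprox hr.le]
  congr 1
  have hSK : expThickening A u r ⊆ K :=
    (expThickening_subset_cthickening hAne u hr.le).trans (Metric.cthickening_mono hr1 A)
  have hSm := (isClosed_expThickening (A := A) u.continuous r).measurableSet
  have hmem : ∀ z ∈ K, (z ∈ expThickening A u r ↔ φ z ∈ Metric.cthickening r (φ '' A)) := by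
    intro z hz
    have hqz := hq0 z (hδU hz)
    rw [mem_cthickening_iff_infDist_le (hAne.image φ) hr.le, hq z (hδU hz)]
    change Metric.infDist z A ≤ r * Real.exp (u z) ↔ _
    rw [hu hz, Real.exp_neg, Real.exp_log hqz, ← div_eq_mul_inv, le_div_iff₀ hqz, mul_comm]
  have himage : Metric.cthickening r (φ '' A) = φ '' expThickening A u r := by
    ext w
    constructor
    · intro hw
      obtain ⟨z, hz, rfl⟩ := hVK (hδ'V (Metric.cthickening_mono hr2 _ hw))
      exact ⟨z, (hmem z hz).mpr hw, rfl⟩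
    · rintro ⟨z, hz, rfl⟩
      exact (hmem z (hSK hz)).mp hz
  rw [himage, integral_image_eq_integral_norm_deriv_sq hU hinj hhol (hSK.trans hδU) hSm]
  exact setIntegral_congr_fun hSm fun z hz => hF (hSK hz)

theorem continuousOn_norm_deriv_invFunOn (hU : IsOpen U) (hAU : A ⊆ U)
    (hinj : InjOn φ U) (hhol : DifferentiableOn ℂ φ U) (hd : 0 ≤ d) :
    ContinuousOn (fun w => ‖deriv φ (Function.invFunOn φ U w)‖ ^ d) (φ '' A) := by
  have hinv : ∀ z ∈ U, Function.invFunOn φ U (φ z) = z := fun z hz => hinj.leftInvOn_invFunOn hz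
  rintro _ ⟨a, ha, rfl⟩
  have haU := hU.mem_nhds (hAU ha)
  have han := hhol.analyticAt haU
  refine ContinuousAt.continuousWithinAt ?_
  have h1 : Tendsto (fun w => ‖deriv φ (Function.invFunOn φ U w)‖ ^ d) (𝓝 (φ a))
      (𝓝 (‖deriv φ a‖ ^ d)) := by
    rw [← han.hasStrictDerivAt.map_nhds_eq (deriv_ne_zero_of_injOn_nhds han haU hinj),
      tendsto_map'_iff]
    refine (han.deriv.continuousAt.norm.rpow_const (Or.inr hd)).congr' ?_
    filter_upwards [haU] with z hz
    simp only [Function.comp_apply, hinv z hz]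
  rwa [ContinuousAt, hinv a (hAU ha)]

end Covariance

/-- Conformal covariance of occupation measures: if the compact set `A ⊆ ℂ` has a
`d`-occupation measure `m_A` with `d ∈ (0,2)`, and `φ` is a conformal map (injective and
holomorphic) on an open set `U ⊇ A`, then `φ(A)` has a `d`-occupation measure, namely the
measure with density `w ↦ |φ'(φ⁻¹(w))|^d` with respect to the pushforward `φ_* m_A`. -/
theorem occupationMeasure_conformal_covariance
    (d : ℝ) (hd : d ∈ Set.Ioo (0 : ℝ) 2)
    (A : Set ℂ) (hA : IsCompact A)
    (mA : Measure ℂ) (hmA : IsOccupationMeasure A d mA)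
    (U : Set ℂ) (hU : IsOpen U) (hAU : A ⊆ U)
    (φ : ℂ → ℂ) (hinj : Set.InjOn φ U) (hhol : DifferentiableOn ℂ φ U) :
    IsOccupationMeasure (φ '' A) d
      ((Measure.map φ mA).withDensity
        (fun w => ENNReal.ofReal (‖deriv φ (Function.invFunOn φ U w)‖ ^ d))) := by
  have hfin : IsFiniteMeasure mA := ⟨hmA.2.1.lt_top⟩
  have hφA : IsCompact (φ '' A) := hA.image_of_continuousOn (hhol.continuousOn.mono hAU)
  have hae : ∀ᵐ z ∂mA, z ∈ A := hmA.measure_compl hA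
  have hrestrict : mA.restrict A = mA := Measure.restrict_eq_self_of_ae_mem hae
  have hφm : AEMeasurable φ mA := by
    rw [← hrestrict]
    exact (hhol.continuousOn.mono hAU).aemeasurable hA.measurableSet
  have hae' : ∀ᵐ w ∂(Measure.map φ mA), w ∈ φ '' A := by
    refine (ae_map_iff hφm hφA.measurableSet).mpr ?_
    filter_upwards [hae] with z hz
    exact Set.mem_image_of_mem φ hz
  have hinv : ∀ z ∈ U, Function.invFunOn φ U (φ z) = z := fun z hz => hinj.leftInvOn_invFunOn hz
  have hcont := continuousOn_norm_deriv_invFunOn hU hAU hinj hhol hd.1.le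
  have hDm : AEMeasurable (fun w => ‖deriv φ (Function.invFunOn φ U w)‖ ^ d)
      (Measure.map φ mA) := by
    rw [← Measure.restrict_eq_self_of_ae_mem hae']
    exact hcont.aemeasurable hφA.measurableSet
  have hint : ∀ f : BoundedContinuousFunction ℂ ℝ,
      ∫ w, f w ∂((Measure.map φ mA).withDensity
        (fun w => ENNReal.ofReal (‖deriv φ (Function.invFunOn φ U w)‖ ^ d))) =
      ∫ z, ‖deriv φ z‖ ^ d * f (φ z) ∂mA := by
    intro f
    rw [integral_withDensity_eq_integral_toReal_smul₀ hDm.ennreal_ofReal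
      (Filter.Eventually.of_forall fun _ => ENNReal.ofReal_lt_top), integral_map hφm]
    · refine integral_congr_ae ?_
      filter_upwards [hae] with z hz
      rw [hinv z (hAU hz), ENNReal.toReal_ofReal (Real.rpow_nonneg (norm_nonneg _) _), smul_eq_mul]
    · exact (hDm.ennreal_ofReal.ennreal_toReal.smul
        f.continuous.measurable.aemeasurable).aestronglyMeasurable
  refine ⟨?_, ?_, fun f => ?_⟩
  · intro h0
    rw [withDensity_apply_eq_zero' hDm.ennreal_ofReal, Set.inter_univ] at h0
    have h1 : ∀ᵐ w ∂(Measure.map φ mA),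
        ENNReal.ofReal (‖deriv φ (Function.invFunOn φ U w)‖ ^ d) = 0 := by
      rw [ae_iff]
      exact h0
    have h2 : ∀ᵐ w ∂(Measure.map φ mA), False := by
      filter_upwards [h1, hae'] with w hw hwA
      obtain ⟨z, hz, rfl⟩ := hwA
      rw [hinv z (hAU hz), ENNReal.ofReal_eq_zero] at hw
      have hzU := hU.mem_nhds (hAU hz)
      exact hw.not_gt (Real.rpow_pos_of_pos (norm_pos_iff.mpr
        (deriv_ne_zero_of_injOn_nhds (hhol.analyticAt hzU) hzU hinj)) d)
    have h3 : Measure.map φ mA = 0 := by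
      simpa [ae_iff] using h2
    rw [Measure.map_eq_zero_iff hφm] at h3
    exact hmA.1 (by simp [h3])
  · obtain ⟨C, hC⟩ := hφA.bddAbove_image hcont
    rw [withDensity_apply _ MeasurableSet.univ, Measure.restrict_univ]
    refine ne_top_of_le_ne_top (b := ENNReal.ofReal C * (Measure.map φ mA) Set.univ)
      (ENNReal.mul_ne_top ENNReal.ofReal_ne_top (measure_ne_top _ _)) ?_
    rw [← lintegral_const]
    refine lintegral_mono_ae ?_
    filter_upwards [hae'] with w hw
    exact ENNReal.ofReal_le_ofReal (hC (Set.mem_image_of_mem _ hw))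
  · rw [hint f]
    exact hmA.tendsto_integral_image hA hd.2 hU hAU hinj hhol f
end

section
/- Let d ∈ (0, 2) and let A ⊂ ℂ be a compact set whose d-occupation measure m_A exists, and let φ : U → ℂ be a conformal map (injective holomorphic) on an open set U containing A, so that by the conformal covariance of occupation measures the d-occupation measure m_{φ(A)} of φ(A) exists. If m_A satisfies the energy condition: ∬_{U'×U'} |x − y|^{−(d−ε)} dm_A(x) dm_A(y) < ∞ for every bounded set U' ⊂ ℂ and every ε ∈ (0, d), then m_{φ(A)} satisfies the same energy condition (with m_A replaced by m_{φ(A)}). -/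
open MeasureTheory

/-- The energy condition for a measure `m` and exponent `d`:
`∬_{U'×U'} |x-y|^{-(d-ε)} dm(x) dm(y) < ∞` for all bounded `U'` and all `ε ∈ (0,d)`. -/
def EnergyCondition (m : Measure ℂ) (d : ℝ) : Prop :=
  ∀ U' : Set ℂ, Bornology.IsBounded U' → ∀ ε ∈ Set.Ioo (0 : ℝ) d,
    (∫⁻ x in U', ∫⁻ y in U', (edist x y) ^ (-(d - ε)) ∂m ∂m) < ⊤

open Filter Topology Set Metric ENNReal

/-- A function injective on a neighborhood of a point is not locally constant there. -/
theorem not_eventually_eq_of_injOn {U : Set ℂ} {φ : ℂ → ℂ} (hinj : InjOn φ U) {a : ℂ}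
    (hU : U ∈ 𝓝 a) : ¬ ∀ᶠ z in 𝓝 a, φ z = φ a := by
  intro hconst
  have : (𝓝[≠] a).NeBot := NormedField.nhdsNE_neBot a
  obtain ⟨z, ⟨hz, hzU⟩, hza⟩ := (((hconst.and hU).filter_mono
    (nhdsWithin_le_nhds (s := {a}ᶜ))).and self_mem_nhdsWithin).exists
  exact hza (hinj hzU (mem_of_mem_nhds hU) hz)

/-- An injective holomorphic function is open at every point. -/
theorem nhds_le_map_nhds_of_injOn {U : Set ℂ} (hU : IsOpen U) {φ : ℂ → ℂ}
    (hinj : InjOn φ U) (hhol : DifferentiableOn ℂ φ U) {a : ℂ} (ha : a ∈ U) :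
    𝓝 (φ a) ≤ map φ (𝓝 a) :=
  (hhol.analyticAt (hU.mem_nhds ha)).eventually_constant_or_nhds_le_map_nhds.resolve_left
    (not_eventually_eq_of_injOn hinj (hU.mem_nhds ha))

/-- The derivative of an injective holomorphic function does not vanish. -/
theorem deriv_ne_zero_of_injOn {U : Set ℂ} (hU : IsOpen U) {φ : ℂ → ℂ}
    (hinj : InjOn φ U) (hhol : DifferentiableOn ℂ φ U) {a : ℂ} (ha : a ∈ U) :
    deriv φ a ≠ 0 := by
  have hleft : LeftInvOn (Function.invFunOn φ U) φ U := hinj.leftInvOn_invFunOn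
  set ψ := Function.invFunOn φ U
  have hopen {z : ℂ} (hz : z ∈ U) : 𝓝 (φ z) ≤ map φ (𝓝 z) :=
    nhds_le_map_nhds_of_injOn hU hinj hhol hz
  have hcont {z : ℂ} (hz : z ∈ U) : ContinuousAt ψ (φ z) := by
    rw [ContinuousAt, hleft hz]
    refine Tendsto.mono_left ?_ (hopen hz)
    rw [tendsto_map'_iff]
    refine tendsto_id.congr' ?_
    filter_upwards [hU.mem_nhds hz] with w hw using (hleft hw).symm
  have hright {z : ℂ} (hz : z ∈ U) : ∀ᶠ w in 𝓝 (φ z), φ (ψ w) = w := by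
    refine hopen hz ?_
    rw [mem_map]
    filter_upwards [hU.mem_nhds hz] with w hw
    simp [hleft hw]
  have han : AnalyticAt ℂ φ a := hhol.analyticAt (hU.mem_nhds ha)
  have hdne : ∀ᶠ z in 𝓝[≠] a, deriv φ z ≠ 0 := by
    refine han.deriv.eventually_eq_zero_or_eventually_ne_zero.resolve_left fun h0 => ?_
    obtain ⟨ε, hε, hball⟩ := Metric.eventually_nhds_iff_ball.1 (h0.and (hU.mem_nhds ha))
    refine not_eventually_eq_of_injOn hinj (hU.mem_nhds ha) ?_
    filter_upwards [ball_mem_nhds a hε] with z hz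
    exact isOpen_ball.is_const_of_deriv_eq_zero (convex_ball a ε).isPreconnected
      (hhol.mono fun w hw => (hball w hw).2) (fun w hw => (hball w hw).1) hz
      (mem_ball_self hε)
  have hψ : AnalyticAt ℂ ψ (φ a) := by
    refine Complex.analyticAt_of_differentiable_on_punctured_nhds_of_continuousAt ?_ (hcont ha)
    rw [eventually_nhdsWithin_iff] at hdne ⊢
    refine hopen ha ?_
    rw [mem_map]
    filter_upwards [hdne, hU.mem_nhds ha] with z hz hzU hne
    have hza : z ≠ a := fun h => hne (by simp [h])
    have hd : HasDerivAt φ (deriv φ z) (ψ (φ z)) := by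
      rw [hleft hzU]
      exact (hhol.differentiableAt (hU.mem_nhds hzU)).hasDerivAt
    exact (hd.of_local_left_inverse (hcont hzU) (hz hza) (hright hzU)).differentiableAt
  intro h0
  have h1 : HasDerivAt (ψ ∘ φ) (deriv ψ (φ a) * deriv φ a) a :=
    hψ.differentiableAt.hasDerivAt.comp a han.differentiableAt.hasDerivAt
  have h2 : HasDerivAt (ψ ∘ φ) 1 a := by
    refine (hasDerivAt_id a).congr_of_eventuallyEq ?_
    filter_upwards [hU.mem_nhds ha] with w hw using hleft hw
  have := h1.unique h2
  simp [h0] at this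

/-- On compact sets, the inverse of an injective holomorphic function is Lipschitz. -/
theorem exists_dist_le_mul_dist_image {U : Set ℂ} (hU : IsOpen U) {φ : ℂ → ℂ}
    (hinj : InjOn φ U) (hhol : DifferentiableOn ℂ φ U) {K : Set ℂ} (hK : IsCompact K)
    (hKU : K ⊆ U) :
    ∃ L : ℝ, 0 < L ∧ ∀ x ∈ K, ∀ y ∈ K, dist x y ≤ L * dist (φ x) (φ y) := by
  have hloc : ∀ p ∈ K ×ˢ K, (fun q : ℂ × ℂ => q.1 - q.2) =O[𝓝 p] fun q => φ q.1 - φ q.2 := by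
    rintro ⟨a, b⟩ ⟨ha, hb⟩
    have haU := hU.mem_nhds (hKU ha)
    have hbU := hU.mem_nhds (hKU hb)
    rcases eq_or_ne a b with rfl | hab
    · exact ((hhol.analyticAt haU).hasStrictDerivAt.isTheta_sub
        (deriv_ne_zero_of_injOn hU hinj hhol (hKU ha))).isBigO_symm
    · have hφ : Tendsto (fun q : ℂ × ℂ => φ q.1 - φ q.2) (𝓝 (a, b)) (𝓝 (φ a - φ b)) :=
        ((hhol.continuousOn.continuousAt haU).tendsto.comp continuousAt_fst).sub
          ((hhol.continuousOn.continuousAt hbU).tendsto.comp continuousAt_snd)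
      have hid : Tendsto (fun q : ℂ × ℂ => q.1 - q.2) (𝓝 (a, b)) (𝓝 (a - b)) :=
        (continuous_fst.sub continuous_snd).tendsto (a, b)
      have hpos : 0 < ‖φ a - φ b‖ :=
        norm_pos_iff.2 (sub_ne_zero.2 fun h => hab (hinj (hKU ha) (hKU hb) h))
      refine (hid.isBigO_one ℝ).trans
        ((Asymptotics.isBigO_const_left_iff_pos_le_norm one_ne_zero).2
          ⟨‖φ a - φ b‖ / 2, half_pos hpos, ?_⟩)
      filter_upwards [hφ.norm.eventually (lt_mem_nhds (half_lt_self hpos))] with q hq using hq.le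
  suffices h : ∃ L : ℝ, 0 < L ∧ ∀ p ∈ K ×ˢ K, dist p.1 p.2 ≤ L * dist (φ p.1) (φ p.2) by
    obtain ⟨L, hL, h⟩ := h
    exact ⟨L, hL, fun x hx y hy => h (x, y) ⟨hx, hy⟩⟩
  refine (hK.prod hK).induction_on
    (p := fun S => ∃ L : ℝ, 0 < L ∧ ∀ p ∈ S, dist p.1 p.2 ≤ L * dist (φ p.1) (φ p.2))
    ⟨1, one_pos, by simp⟩ ?_ ?_ ?_
  · rintro s t hst ⟨L, hL, h⟩
    exact ⟨L, hL, fun p hp => h p (hst hp)⟩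
  · rintro s t ⟨L, hL, h⟩ ⟨M, hM, h'⟩
    refine ⟨max L M, lt_max_of_lt_left hL, ?_⟩
    rintro p (hp | hp)
    · exact (h p hp).trans (by gcongr; exact le_max_left L M)
    · exact (h' p hp).trans (by gcongr; exact le_max_right L M)
  · intro p hp
    obtain ⟨L, hL, h⟩ := (hloc p hp).exists_pos
    exact ⟨_, mem_nhdsWithin_of_mem_nhds h.bound, L, hL, fun q hq => by
      simpa [dist_eq_norm] using hq⟩

/-- On compact sets, a holomorphic function increases Lebesgue measure by at most a constant
factor. -/
theorem exists_volume_image_le {U : Set ℂ} (hU : IsOpen U) {φ : ℂ → ℂ}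
    (hhol : DifferentiableOn ℂ φ U) {K : Set ℂ} (hK : IsCompact K) (hKU : K ⊆ U) :
    ∃ C : ℝ≥0∞, C ≠ ⊤ ∧ ∀ S ⊆ K, MeasurableSet S → volume (φ '' S) ≤ C * volume S := by
  let φ' : ℂ → ℂ →L[ℝ] ℂ := fun z => (fderiv ℂ φ z).restrictScalars ℝ
  have hcont : ContinuousOn (fun z => |(φ' z).det|) K := by
    have h1 : ContinuousOn (fderiv ℂ φ) K := fun z hz =>
      (hhol.analyticAt (hU.mem_nhds (hKU hz))).fderiv.continuousAt.continuousWithinAt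
    exact (ContinuousLinearMap.continuous_det.comp_continuousOn
      ((ContinuousLinearMap.restrictScalarsL ℂ ℂ ℂ ℝ ℝ).continuous.comp_continuousOn h1)).abs
  obtain ⟨M, hM⟩ := hK.bddAbove_image hcont
  refine ⟨ENNReal.ofReal M, ofReal_ne_top, fun S hSK hS => ?_⟩
  calc volume (φ '' S) ≤ ∫⁻ x in S, ENNReal.ofReal |(φ' x).det| :=
        addHaar_image_le_lintegral_abs_det_fderiv volume hS fun x hx =>
          ((hhol.differentiableAt (hU.mem_nhds
            (hKU (hSK hx)))).hasFDerivAt.restrictScalars ℝ).hasFDerivWithinAt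
    _ ≤ ∫⁻ _ in S, ENNReal.ofReal M :=
        setLIntegral_mono' hS fun x hx => ofReal_le_ofReal (hM (mem_image_of_mem _ (hSK hx)))
    _ = ENNReal.ofReal M * volume S := by simp

/-- If every nonnegative bounded continuous function has smaller integral against `μ` than
against `ν`, then `μ ≤ ν`. -/
theorem measure_le_of_forall_integral_le {X : Type*} [MeasurableSpace X] [PseudoMetricSpace X]
    [BorelSpace X] {μ ν : Measure X} [IsFiniteMeasure μ] [IsFiniteMeasure ν]
    (h : ∀ f : BoundedContinuousFunction X ℝ, 0 ≤ f → ∫ x, f x ∂μ ≤ ∫ x, f x ∂ν) : μ ≤ ν := by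
  have hδ (n : ℕ) : (0 : ℝ) < 1 / ((n : ℝ) + 1) := by positivity
  have hclosed (F : Set X) (hF : IsClosed F) : μ F ≤ ν F := by
    have key := le_of_tendsto_of_tendsto'
      (tendsto_integral_thickenedIndicator_of_isClosed μ hF hδ
        tendsto_one_div_add_atTop_nhds_zero_nat)
      (tendsto_integral_thickenedIndicator_of_isClosed ν hF hδ
        tendsto_one_div_add_atTop_nhds_zero_nat)
      (fun n => h (BoundedContinuousFunction.ofNormedAddCommGroup
        (fun x => (thickenedIndicator (hδ n) F x : ℝ))
        (by fun_prop) 1 fun x => by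
          simpa using thickenedIndicator_le_one (hδ n) F x) fun x => by simp)
    rwa [measureReal_def, measureReal_def, toReal_le_toReal (by finiteness) (by finiteness)] at key
  refine Measure.le_iff.2 fun S hS => ?_
  rw [hS.measure_eq_iSup_isClosed_of_ne_top (by finiteness)]
  exact iSup₂_le fun F hFS => iSup_le fun hF => (hclosed F hF).trans (measure_mono hFS)

theorem isFiniteMeasure_occApprox {A : Set ℂ} (hA : IsCompact A) (d r : ℝ) :
    IsFiniteMeasure (occApprox A d r) := by
  refine ⟨?_⟩
  have := (hA.cthickening (r := r)).measure_lt_top (μ := volume)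
  simpa [occApprox] using ENNReal.mul_lt_top ofReal_lt_top this

/-- The occupation measure of a compact set is carried by the set. -/
theorem IsOccupationMeasure.ae_mem {A : Set ℂ} (hA : IsCompact A) {d : ℝ} {m : Measure ℂ}
    (hm : IsOccupationMeasure A d m) : ∀ᵐ x ∂m, x ∈ A := by
  obtain ⟨hm0, hmt, hlim⟩ := hm
  have : IsFiniteMeasure m := ⟨lt_top_iff_ne_top.2 hmt⟩
  have hmass : Tendsto (fun r : ℝ => (occApprox A d r).real univ) (𝓝[>] 0)
      (𝓝 (m.real univ)) := by
    simpa using hlim (BoundedContinuousFunction.const ℂ 1)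
  rcases A.eq_empty_or_nonempty with rfl | hne
  · refine absurd ?_ hm0
    have h0 : Tendsto (fun r : ℝ => (occApprox ∅ d r).real univ) (𝓝[>] 0) (𝓝 0) := by
      simp [occApprox]
    exact (measureReal_eq_zero_iff hmt).1 (tendsto_nhds_unique hmass h0)
  let f : BoundedContinuousFunction ℂ ℝ :=
    BoundedContinuousFunction.ofNormedAddCommGroup (fun x => min 1 (infDist x A))
      (by fun_prop) 1 fun x => by
        rw [Real.norm_of_nonneg (le_min zero_le_one infDist_nonneg)]
        exact min_le_left _ _
  have hf0 (x : ℂ) : 0 ≤ f x := le_min zero_le_one infDist_nonneg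
  have hsmall : Tendsto (fun r : ℝ => ∫ z, f z ∂(occApprox A d r)) (𝓝[>] 0) (𝓝 0) := by
    have hmul : Tendsto (fun r : ℝ => r * (occApprox A d r).real univ) (𝓝[>] 0) (𝓝 0) := by
      simpa using (tendsto_nhdsWithin_of_tendsto_nhds tendsto_id).mul hmass
    refine squeeze_zero' (Eventually.of_forall fun r => integral_nonneg hf0) ?_ hmul
    filter_upwards [self_mem_nhdsWithin] with r (hr : 0 < r)
    have := isFiniteMeasure_occApprox hA d r
    calc ∫ z, f z ∂(occApprox A d r) ≤ ∫ _, r ∂(occApprox A d r) := by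
          refine integral_mono_ae (f.integrable _) (integrable_const r) ?_
          refine Measure.ae_smul_measure ?_ _
          filter_upwards [ae_restrict_mem isClosed_cthickening.measurableSet] with z hz
          refine (min_le_right _ _).trans ?_
          rw [hA.cthickening_eq_biUnion_closedBall hr.le] at hz
          simp only [mem_iUnion, mem_closedBall] at hz
          obtain ⟨a, ha, hza⟩ := hz
          exact (infDist_le_dist_of_mem ha).trans hza
      _ = r * (occApprox A d r).real univ := by simp [mul_comm]
  have hzero : ∫ z, f z ∂m = 0 := tendsto_nhds_unique (hlim f) hsmall
  rw [integral_eq_zero_iff_of_nonneg hf0 (f.integrable _)] at hzero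
  filter_upwards [hzero] with x hx
  refine (hA.isClosed.mem_iff_infDist_zero hne).2 ?_
  have hx : min 1 (infDist x A) = 0 := hx
  rcases min_choice 1 (infDist x A) with h | h <;> rw [h] at hx
  · exact absurd hx one_ne_zero
  · exact hx

/-- Small neighborhoods of the image of a compact set under an injective holomorphic function are
contained in images of comparable neighborhoods. -/
theorem eventually_cthickening_image_subset {U : Set ℂ} (hU : IsOpen U) {φ : ℂ → ℂ}
    (hinj : InjOn φ U) (hhol : DifferentiableOn ℂ φ U) {A : Set ℂ} (hA : IsCompact A) {δ L : ℝ}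
    (hδ : 0 < δ) (hδU : cthickening δ A ⊆ U)
    (hL : ∀ x ∈ cthickening δ A, ∀ y ∈ cthickening δ A, dist x y ≤ L * dist (φ x) (φ y))
    (hL0 : 0 < L) :
    ∀ᶠ r in 𝓝[>] (0 : ℝ), cthickening r (φ '' A) ⊆ φ '' cthickening (L * r) A := by
  have hVU : thickening δ A ⊆ U := (thickening_subset_cthickening δ A).trans hδU
  have hV : IsOpen (φ '' thickening δ A) := by
    rw [isOpen_iff_mem_nhds]
    rintro _ ⟨x, hx, rfl⟩
    exact nhds_le_map_nhds_of_injOn hU hinj hhol (hVU hx)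
      (image_mem_map (isOpen_thickening.mem_nhds hx))
  have hAK : A ⊆ cthickening δ A := self_subset_cthickening A
  have hφA : IsCompact (φ '' A) :=
    hA.image_of_continuousOn (hhol.continuousOn.mono (hAK.trans hδU))
  obtain ⟨ρ, hρ, hρV⟩ := hφA.exists_cthickening_subset_open hV
    (image_mono (self_subset_thickening hδ A))
  filter_upwards [self_mem_nhdsWithin, mem_nhdsWithin_of_mem_nhds (Iio_mem_nhds hρ)] with r hr hrρ
  intro z hz
  obtain ⟨w, hw, rfl⟩ := hρV (cthickening_mono (le_of_lt hrρ) _ hz)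
  rw [hφA.cthickening_eq_biUnion_closedBall (le_of_lt hr)] at hz
  simp only [mem_iUnion, mem_closedBall, exists_prop, exists_mem_image] at hz
  obtain ⟨a, ha, hwa⟩ := hz
  refine mem_image_of_mem _ (mem_cthickening_of_dist_le w a _ A ha ?_)
  exact (hL w (thickening_subset_cthickening δ A hw) a (hAK ha)).trans (by gcongr)

/-- If the approximating measures of `B` are eventually dominated by a constant multiple of the
images under `g` of those of `A`, at a comparable scale, then the same domination holds for the
occupation measures. -/
theorem IsOccupationMeasure.le_smul_map {A B : Set ℂ} (hA : IsCompact A) {d L : ℝ}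
    {mA mB : Measure ℂ} (hmA : IsOccupationMeasure A d mA)
    (hmB : IsOccupationMeasure B d mB) {g : ℂ → ℂ} (hg : Continuous g) (hL : 0 < L) {C : ℝ≥0∞}
    (hC : C ≠ ⊤)
    (h : ∀ᶠ r in 𝓝[>] (0 : ℝ), occApprox B d r ≤ C • (occApprox A d (L * r)).map g) :
    mB ≤ C • mA.map g := by
  have : IsFiniteMeasure mA := ⟨lt_top_iff_ne_top.2 hmA.2.1⟩
  have : IsFiniteMeasure mB := ⟨lt_top_iff_ne_top.2 hmB.2.1⟩
  have : IsFiniteMeasure (C • mA.map g) := Measure.smul_finite _ hC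
  refine measure_le_of_forall_integral_le fun f hf => ?_
  have hscale : Tendsto (fun r : ℝ => L * r) (𝓝[>] 0) (𝓝[>] 0) := by
    refine tendsto_nhdsWithin_iff.2 ⟨?_, ?_⟩
    · exact tendsto_nhdsWithin_of_tendsto_nhds (by simpa using (continuous_const_mul L).tendsto 0)
    · filter_upwards [self_mem_nhdsWithin] with r hr using mul_pos hL hr
  have hint (m : Measure ℂ) : ∫ x, f x ∂(C • m.map g) = C.toReal * ∫ x, f (g x) ∂m := by
    rw [integral_smul_measure, integral_map hg.aemeasurable
      f.continuous.aestronglyMeasurable, smul_eq_mul]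
  rw [hint]
  have hlimA := ((hmA.2.2 (f.compContinuous ⟨g, hg⟩)).comp hscale).const_mul C.toReal
  refine le_of_tendsto_of_tendsto (hmB.2.2 f) hlimA ?_
  filter_upwards [h] with r hr
  have := isFiniteMeasure_occApprox hA d (L * r)
  have : IsFiniteMeasure (C • (occApprox A d (L * r)).map g) := Measure.smul_finite _ hC
  exact (integral_mono_measure hr (Eventually.of_forall hf) (f.integrable _)).trans_eq (hint _)

/-- The occupation measure of a conformal image is dominated by a multiple of the image of the
occupation measure under a continuous extension `g` of the conformal map. -/
theorem IsOccupationMeasure.exists_le_smul_map_of_injOn {U : Set ℂ} (hU : IsOpen U) {φ g : ℂ → ℂ}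
    (hinj : InjOn φ U) (hhol : DifferentiableOn ℂ φ U) (hg : Continuous g) {A : Set ℂ}
    (hA : IsCompact A) {δ : ℝ} (hδ : 0 < δ) (hδU : cthickening δ A ⊆ U)
    (hgφ : EqOn g φ (cthickening δ A)) {d : ℝ} {mA mB : Measure ℂ}
    (hmA : IsOccupationMeasure A d mA) (hmB : IsOccupationMeasure (φ '' A) d mB) :
    ∃ C : ℝ≥0∞, C ≠ ⊤ ∧ mB ≤ C • mA.map g := by
  have hK : IsCompact (cthickening δ A) := hA.cthickening
  obtain ⟨L, hL0, hL⟩ := exists_dist_le_mul_dist_image hU hinj hhol hK hδU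
  obtain ⟨C, hC, hvol⟩ := exists_volume_image_le hU hhol hK hδU
  have hCL : C * ENNReal.ofReal (L ^ (2 - d)) ≠ ⊤ := ENNReal.mul_ne_top hC ofReal_ne_top
  refine ⟨_, hCL, hmA.le_smul_map hA hmB hg hL0 hCL ?_⟩
  have hLδ : ∀ᶠ r in 𝓝[>] (0 : ℝ), L * r < δ :=
    mem_nhdsWithin_of_mem_nhds (((continuous_const_mul L).tendsto' 0 0 (mul_zero L)).eventually
      (Iio_mem_nhds hδ))
  filter_upwards [self_mem_nhdsWithin, hLδ,
    eventually_cthickening_image_subset hU hinj hhol hA hδ hδU hL hL0] with r (hr : 0 < r) hrδ hsub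
  have hsubK : cthickening (L * r) A ⊆ cthickening δ A := cthickening_mono hrδ.le A
  refine Measure.le_iff.2 fun S hS => ?_
  have hT : MeasurableSet (g ⁻¹' S ∩ cthickening (L * r) A) :=
    (hg.measurable hS).inter isClosed_cthickening.measurableSet
  have himage : S ∩ cthickening r (φ '' A) ⊆ φ '' (g ⁻¹' S ∩ cthickening (L * r) A) := by
    rintro z ⟨hzS, hz⟩
    obtain ⟨w, hw, rfl⟩ := hsub hz
    exact ⟨w, ⟨by rwa [mem_preimage, hgφ (hsubK hw)], hw⟩, rfl⟩
  have hpow : ENNReal.ofReal (L ^ (2 - d)) * ENNReal.ofReal ((L * r) ^ (d - 2))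
      = ENNReal.ofReal (r ^ (d - 2)) := by
    rw [← ofReal_mul (by positivity), Real.mul_rpow hL0.le hr.le, ← mul_assoc,
      ← Real.rpow_add hL0]
    simp
  simp only [occApprox, Measure.smul_apply, smul_eq_mul, Measure.restrict_apply hS,
    Measure.map_apply hg.measurable hS, Measure.restrict_apply (hg.measurable hS)]
  calc ENNReal.ofReal (r ^ (d - 2)) * volume (S ∩ cthickening r (φ '' A))
      ≤ ENNReal.ofReal (r ^ (d - 2)) * (C * volume (g ⁻¹' S ∩ cthickening (L * r) A)) := by
        gcongr
        exact (measure_mono himage).trans (hvol _ (inter_subset_right.trans hsubK) hT)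
    _ = _ := by rw [← hpow]; ring

/-- Energy integrals of dominated measures: if `m' ≤ C • g_* m`, where `m` is carried by `A` and
`g` has a Lipschitz inverse on `A`, then `m'` has finite energy as soon as `m` has. -/
theorem lintegral_lintegral_edist_rpow_lt_top {m m' : Measure ℂ} [IsFiniteMeasure m] {A : Set ℂ}
    (hA : MeasurableSet A) (hmA : ∀ᵐ x ∂m, x ∈ A) {g : ℂ → ℂ} (hg : Measurable g) {C : ℝ≥0∞}
    (hC : C ≠ ⊤) (hle : m' ≤ C • m.map g) {L : ℝ} (hL0 : 0 < L)
    (hL : ∀ x ∈ A, ∀ y ∈ A, dist x y ≤ L * dist (g x) (g y)) {s : ℝ} (hs : 0 < s)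
    (hfin : (∫⁻ x in A, ∫⁻ y in A, edist x y ^ (-s) ∂m ∂m) < ⊤) :
    (∫⁻ x, ∫⁻ y, edist x y ^ (-s) ∂m' ∂m') < ⊤ := by
  have hL' : ENNReal.ofReal L ≠ 0 := by simpa using hL0
  have hpt : ∀ x ∈ A, ∀ y ∈ A,
      edist (g x) (g y) ^ (-s) ≤ ENNReal.ofReal L ^ s * edist x y ^ (-s) := by
    intro x hx y hy
    have hxy : edist x y ≤ ENNReal.ofReal L * edist (g x) (g y) := by
      rw [edist_dist, edist_dist, ← ofReal_mul hL0.le]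
      exact ofReal_le_ofReal (hL x hx y hy)
    have hxy' : (ENNReal.ofReal L)⁻¹ * edist x y ≤ edist (g x) (g y) := by
      rwa [mul_comm, ← div_eq_mul_inv, ENNReal.div_le_iff' hL' ofReal_ne_top]
    calc edist (g x) (g y) ^ (-s) ≤ ((ENNReal.ofReal L)⁻¹ * edist x y) ^ (-s) := by
            rw [ENNReal.rpow_neg, ENNReal.rpow_neg]
            exact ENNReal.inv_le_inv.2 (ENNReal.rpow_le_rpow hxy' hs.le)
      _ = ENNReal.ofReal L ^ s * edist x y ^ (-s) := by
          rw [ENNReal.mul_rpow_of_ne_top (by simpa using hL0) (edist_ne_top _ _),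
            ENNReal.inv_rpow, ENNReal.rpow_neg, inv_inv]
  have hmeas : Measurable fun p : ℂ × ℂ => edist p.1 p.2 ^ (-s) :=
    (measurable_fst.edist measurable_snd).pow_const _
  have hLs : ENNReal.ofReal L ^ s ≠ ⊤ := ENNReal.rpow_ne_top_of_nonneg hs.le ofReal_ne_top
  calc (∫⁻ x, ∫⁻ y, edist x y ^ (-s) ∂m' ∂m')
      ≤ ∫⁻ x, ∫⁻ y, edist x y ^ (-s) ∂(C • m.map g) ∂(C • m.map g) :=
        lintegral_mono' hle fun x => lintegral_mono' hle le_rfl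
    _ = C * (C * ∫⁻ x, ∫⁻ y, edist x y ^ (-s) ∂(m.map g) ∂(m.map g)) := by
        simp only [lintegral_smul_measure, smul_eq_mul]
        rw [lintegral_const_mul' _ _ hC]
    _ = C * (C * ∫⁻ x, ∫⁻ y, edist (g x) (g y) ^ (-s) ∂m ∂m) := by
        rw [lintegral_map hmeas.lintegral_prod_right' hg]
        congr! 4 with x
        exact lintegral_map (by fun_prop) hg
    _ ≤ C * (C * (ENNReal.ofReal L ^ s * ∫⁻ x in A, ∫⁻ y in A, edist x y ^ (-s) ∂m ∂m)) := by
        gcongr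
        conv_lhs => rw [← Measure.restrict_eq_self_of_ae_mem hmA]
        rw [← lintegral_const_mul' _ _ hLs]
        refine setLIntegral_mono' hA fun x hx => ?_
        rw [← lintegral_const_mul' _ _ hLs]
        exact setLIntegral_mono' hA fun y hy => hpt x hx y hy
    _ < ⊤ := by finiteness

/-- If the `d`-occupation measure of a compact `A ⊆ ℂ` satisfies the energy condition and
`φ` is conformal (injective holomorphic) on an open neighborhood of `A`, then the
`d`-occupation measure of `φ(A)` also satisfies the energy condition. -/
theorem energyCondition_conformal_invariance
    (d : ℝ) (hd : d ∈ Set.Ioo (0 : ℝ) 2)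
    (A : Set ℂ) (hA : IsCompact A)
    (mA : Measure ℂ) (hmA : IsOccupationMeasure A d mA)
    (U : Set ℂ) (hU : IsOpen U) (hAU : A ⊆ U)
    (φ : ℂ → ℂ) (hinj : Set.InjOn φ U) (hhol : DifferentiableOn ℂ φ U)
    (mφA : Measure ℂ) (hmφA : IsOccupationMeasure (φ '' A) d mφA)
    (henergy : EnergyCondition mA d) :
    EnergyCondition mφA d := by
  obtain ⟨δ, hδ, hδU⟩ := hA.exists_cthickening_subset_open hU hAU
  have hAK : A ⊆ cthickening δ A := self_subset_cthickening A
  obtain ⟨g, hg⟩ := ContinuousMap.exists_restrict_eq (isClosed_cthickening (δ := δ) (E := A))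
    ⟨_, (hhol.continuousOn.mono hδU).domRestrict⟩
  have hgφ : EqOn g φ (cthickening δ A) := fun x hx => DFunLike.congr_fun hg ⟨x, hx⟩
  obtain ⟨L, hL0, hL⟩ := exists_dist_le_mul_dist_image hU hinj hhol hA hAU
  obtain ⟨C, hC, hle⟩ :=
    hmA.exists_le_smul_map_of_injOn hU hinj hhol g.continuous hA hδ hδU hgφ hmφA
  have : IsFiniteMeasure mA := ⟨lt_top_iff_ne_top.2 hmA.2.1⟩
  intro U' _ ε hε
  calc (∫⁻ x in U', ∫⁻ y in U', edist x y ^ (-(d - ε)) ∂mφA ∂mφA)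
      ≤ ∫⁻ x, ∫⁻ y, edist x y ^ (-(d - ε)) ∂mφA ∂mφA :=
        lintegral_mono' Measure.restrict_le_self fun x => setLIntegral_le_lintegral _ _
    _ < ⊤ := lintegral_lintegral_edist_rpow_lt_top hA.measurableSet (hmA.ae_mem hA)
        g.continuous.measurable hC hle hL0
        (fun x hx y hy => by simpa [hgφ (hAK hx), hgφ (hAK hy)] using hL x hx y hy)
        (sub_pos.2 hε.2) (henergy A hA.isBounded ε hε)
end
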